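/- Multiple-argument relation for depth-one cyclotomic S-sums: let a, c, k be positive integers with k ≥ 2, b a nonnegative integer, x a nonzero real, and n ∈ ℕ. Then S_{(a,b,c)}(x; k·n) = Σ_{i=0}^{k−1} x^{−i} · S_{(k·a, b − a·i, c)}(x^k; n); note that k·a + (b − a·i) ≥ a + b > 0 for 0 ≤ i ≤ k−1, so the sums on the right are well defined. -/

import Mathlib

/-- Cyclotomic S-sums: `cycS [((a₁,b₁,c₁),x₁),…] n` is
`S_{(a₁,b₁,c₁),…}(x₁,…; n)`. The empty sum equals `1`. -/
noncomputable def cycS : List ((ℕ × ℤ × ℕ) × ℝ) → ℕ → ℝ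
  | [], _ => 1
  | ((a, b, c), x) :: t, n =>
      ∑ i ∈ Finset.Icc 1 n, x ^ i / ((a : ℝ) * i + (b : ℝ)) ^ c * cycS t i

/-!
Every `m` with `1 ≤ m ≤ k * n` is uniquely `k * j - i` with `1 ≤ j ≤ n` and `0 ≤ i < k`. Splitting
the sum over `m` according to `i` and pulling `x ^ (-i)` out of `x ^ (k * j - i)` gives the
relation, since `a * (k * j - i) + b = (k * a) * j + (b - a * i)`.
-/

open Finset in
lemma sum_Icc_one_mul {M : Type*} [AddCommMonoid M] (f : ℕ → M) (k n : ℕ) :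
    ∑ m ∈ Icc 1 (k * n), f m = ∑ i ∈ range k, ∑ j ∈ Icc 1 n, f (k * j - i) := by
  rw [sum_comm]
  induction n with
  | zero => simp
  | succ n ih =>
    have last_block :
        ∑ i ∈ range k, f (k * (n + 1) - i) = ∑ m ∈ Ioc (k * n) (k * (n + 1)), f m := by
      rw [range_eq_Ico, sum_Ico_reflect f 0 (by grind)]
      congr 1
      grind
    -- `Icc 1 m` and `Ioc 0 m` are definitionally equal on `ℕ`, so `sum_Ioc_consecutive` applies.
    calc ∑ m ∈ Icc 1 (k * (n + 1)), f m
        = ∑ m ∈ Icc 1 (k * n), f m + ∑ m ∈ Ioc (k * n) (k * (n + 1)), f m :=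
          (sum_Ioc_consecutive f (Nat.zero_le _) (Nat.mul_le_mul_left k n.le_succ)).symm
      _ = ∑ j ∈ Icc 1 (n + 1), ∑ i ∈ range k, f (k * j - i) := by
          rw [sum_Icc_succ_top (by lia), ih, last_block]

lemma pow_div_linear_pow_mul_sub {K : Type*} [Field K] {x : K} (hx : x ≠ 0) (a b : K) (c : ℕ)
    {k j i : ℕ} (hi : i ≤ k * j) :
    x ^ (k * j - i) / (a * (k * j - i : ℕ) + b) ^ c =
      x ^ (-(i : ℤ)) * ((x ^ k) ^ j / (k * a * j + (b - a * i)) ^ c) := by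
  have denom : a * (k * j - i : ℕ) + b = k * a * j + (b - a * i) := by
    push_cast [hi]
    ring
  rw [denom, pow_sub₀ x hx hi, pow_mul, zpow_neg, zpow_natCast]
  ring

lemma cycS_singleton (a : ℕ) (b : ℤ) (c : ℕ) (x : ℝ) (n : ℕ) :
    cycS [((a, b, c), x)] n = ∑ i ∈ Finset.Icc 1 n, x ^ i / ((a : ℝ) * i + b) ^ c := by
  simp only [cycS, mul_one]

theorem cycS_depth_one_mult_arg_general (a c k : ℕ) (b : ℤ) (x : ℝ) (n : ℕ)
    (_hab : 0 < a + b) (hx : x ≠ 0) :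
    cycS [((a, b, c), x)] (k * n) =
      ∑ i ∈ Finset.range k, x ^ (-(i : ℤ)) *
        cycS [((k * a, b - (a : ℤ) * (i : ℤ), c), x ^ k)] n := by
  simp only [cycS_singleton, sum_Icc_one_mul, Finset.mul_sum]
  refine Finset.sum_congr rfl fun i hi ↦ Finset.sum_congr rfl fun j hj ↦ ?_
  have i_le : i ≤ k * j :=
    (Finset.mem_range.mp hi).le.trans (Nat.le_mul_of_pos_right k (Finset.mem_Icc.mp hj).1)
  simpa using pow_div_linear_pow_mul_sub hx (a : ℝ) b c i_le

/-- Multiple-argument relation for depth-one cyclotomic S-sums: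
`S_{(a,b,c)}(x; k·n) = Σ_{i=0}^{k−1} x^{−i} · S_{(k·a, b − a·i, c)}(x^k; n)`. -/
theorem cycS_depth_one_mult_arg (a c k b : ℕ) (x : ℝ) (n : ℕ)
    (ha : 0 < a) (hc : 0 < c) (hk : 2 ≤ k) (hx : x ≠ 0) :
    cycS [((a, (b : ℤ), c), x)] (k * n) =
      ∑ i ∈ Finset.range k, x ^ (-(i : ℤ)) *
        cycS [((k * a, (b : ℤ) - (a : ℤ) * (i : ℤ), c), x ^ k)] n :=
  cycS_depth_one_mult_arg_general a c k b x n (by lia) hx
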